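/- Let n ∈ ℕ, p⃗, q⃗ ∈ (0,∞)^n and α⃗ ∈ ℝⁿ. Then H(ℝⁿ) is dense in Ė^{α⃗,p⃗}_{q⃗}(ℝⁿ): for every f ∈ Ė^{α⃗,p⃗}_{q⃗}(ℝⁿ) and every ε > 0 there exists g ∈ H(ℝⁿ) with ‖f - g‖_{Ė^{α⃗,p⃗}_{q⃗}(ℝⁿ)} < ε. -/

import Mathlib

open MeasureTheory ENNReal Filter

noncomputable section

/-- The dyadic annulus `R_k = (-2^k, 2^k) \ (-2^(k-1), 2^(k-1))` in `ℝ`. -/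
def herzRing (k : ℤ) : Set ℝ :=
  Set.Ioo (-(2 : ℝ) ^ k) ((2 : ℝ) ^ k) \ Set.Ioo (-(2 : ℝ) ^ (k - 1)) ((2 : ℝ) ^ (k - 1))

/-- The `L^q` "norm" (valued in `ℝ≥0∞`) of an `ℝ≥0∞`-valued function on a set `s ⊆ ℝ`,
with the usual modification when `q = ∞`. -/
def lqNormOn (q : ℝ≥0∞) (s : Set ℝ) (g : ℝ → ℝ≥0∞) : ℝ≥0∞ :=
  if q = ∞ then essSup (s.indicator g) volume
  else (∫⁻ x in s, g x ^ q.toReal) ^ (1 / q.toReal)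

/-- The `l^p` norm over `ℤ` of an `ℝ≥0∞`-valued sequence, with the usual modification
when `p = ∞`. -/
def lpZNorm (p : ℝ≥0∞) (a : ℤ → ℝ≥0∞) : ℝ≥0∞ :=
  if p = ∞ then ⨆ k, a k
  else (∑' k : ℤ, a k ^ p.toReal) ^ (1 / p.toReal)

/-- The one-dimensional Herz norm `K^{α,p}_q` of an `ℝ≥0∞`-valued function on `ℝ`. -/
def herzNorm1 (α : ℝ) (p q : ℝ≥0∞) (g : ℝ → ℝ≥0∞) : ℝ≥0∞ :=
  lpZNorm p fun k => ENNReal.ofReal ((2 : ℝ) ^ ((k : ℝ) * α)) * lqNormOn q (herzRing k) g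

/-- The mixed-norm Herz norm on `ℝⁿ` of an `ℝ≥0∞`-valued function: the Herz norm
`K^{α_1,p_1}_{q_1}` is applied in the first variable, then `K^{α_2,p_2}_{q_2}` in the
second variable, …, and finally `K^{α_n,p_n}_{q_n}` in the last variable. -/
def mixedHerzNormE : (n : ℕ) → (Fin n → ℝ) → (Fin n → ℝ≥0∞) → (Fin n → ℝ≥0∞) →
    ((Fin n → ℝ) → ℝ≥0∞) → ℝ≥0∞
  | 0, _, _, _, f => f fun i => i.elim0
  | n + 1, α, p, q, f =>
    herzNorm1 (α (Fin.last n)) (p (Fin.last n)) (q (Fin.last n)) fun xlast =>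
      mixedHerzNormE n (Fin.init α) (Fin.init p) (Fin.init q) fun y => f (Fin.snoc y xlast)

/-- The mixed-norm Herz norm `‖f‖_{Ė^{α,p}_q(ℝⁿ)}` of a complex-valued function on `ℝⁿ`. -/
def herzNormC (n : ℕ) (α : Fin n → ℝ) (p q : Fin n → ℝ≥0∞) (f : (Fin n → ℝ) → ℂ) : ℝ≥0∞ :=
  mixedHerzNormE n α p q fun x => (‖f x‖₊ : ℝ≥0∞)

/-- `I_m = (-2^m, -2^{-m}] ∪ [2^{-m}, 2^m)`. -/
def herzI (m : ℕ) : Set ℝ :=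
  Set.Ioc (-(2 : ℝ) ^ (m : ℤ)) (-(2 : ℝ) ^ (-(m : ℤ))) ∪
    Set.Ico ((2 : ℝ) ^ (-(m : ℤ))) ((2 : ℝ) ^ (m : ℤ))

/-- `A_m = I_m^n ⊆ ℝⁿ`. -/
def herzA (n m : ℕ) : Set (Fin n → ℝ) := Set.univ.pi fun _ => herzI m

/-- The class `H(ℝⁿ)` of simple functions built from finitely many pairwise disjoint
parallelepipeds contained in some `A_m`. -/
def IsHSimple (n : ℕ) (f : (Fin n → ℝ) → ℂ) : Prop :=
  ∃ (m N : ℕ) (a : Fin N → ℂ) (E : Fin N → Fin n → Set ℝ),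
    (∀ k i, MeasurableSet (E k i)) ∧
    (∀ k, Set.univ.pi (E k) ⊆ herzA n m) ∧
    (Pairwise fun k l => Disjoint (Set.univ.pi (E k)) (Set.univ.pi (E l))) ∧
    f = fun x => ∑ k, (Set.univ.pi (E k)).indicator (fun _ => a k) x

/-- The Euclidean ball `B(x,r)` in `ℝⁿ`. -/
def eucBall (n : ℕ) (x : Fin n → ℝ) (r : ℝ) : Set (Fin n → ℝ) :=
  {y | ∑ i, (y i - x i) ^ 2 < r ^ 2}

/-- The (uncentered) maximal operator in the `k`-th variable. -/
def maxVar (n : ℕ) (k : Fin n) (g : (Fin n → ℝ) → ℝ≥0∞) : (Fin n → ℝ) → ℝ≥0∞ :=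
  fun x => ⨆ (a : ℝ) (b : ℝ) (_ : x k ∈ Set.Ioo a b),
    (volume (Set.Ioo a b))⁻¹ * ∫⁻ y in Set.Ioo a b, g (Function.update x k y)

/-- The centered Hardy–Littlewood maximal operator on `ℝⁿ`. -/
def centeredMax (n : ℕ) (g : (Fin n → ℝ) → ℝ≥0∞) : (Fin n → ℝ) → ℝ≥0∞ :=
  fun x => ⨆ (r : ℝ) (_ : 0 < r),
    (volume (eucBall n x r))⁻¹ * ∫⁻ y in eucBall n x r, g y

/-- The composition `M_n ∘ ⋯ ∘ M_1` of the maximal operators in each variable. -/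
def iteratedMax (n : ℕ) (g : (Fin n → ℝ) → ℝ≥0∞) : (Fin n → ℝ) → ℝ≥0∞ :=
  (List.ofFn fun k : Fin n => maxVar n k).foldl (fun h F => F h) g

/-- The iterated maximal operator `ℳ_t(f) = [M_n ⋯ M_1(|f|^t)]^{1/t}`. -/
def iterMaxPow (n : ℕ) (t : ℝ) (f : (Fin n → ℝ) → ℂ) : (Fin n → ℝ) → ℝ≥0∞ :=
  fun x => iteratedMax n (fun y => (‖f y‖₊ : ℝ≥0∞) ^ t) x ^ (1 / t)

/-- The `l^r`-Herz type mixed norm of a sequence of functions on `ℝⁿ`. -/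
def herzSeqNorm (n : ℕ) (r : ℝ≥0∞) (α : Fin n → ℝ) (p q : Fin n → ℝ≥0∞)
    (F : ℤ → (Fin n → ℝ) → ℂ) : ℝ≥0∞ :=
  mixedHerzNormE n α p q fun x => lpZNorm r fun j => (‖F j x‖₊ : ℝ≥0∞)

/-- `N` is a ball quasi-Banach function norm on (nonnegative extended-real-valued)
measurable functions on `ℝⁿ`. -/
def IsBQBFNorm (n : ℕ) (N : ((Fin n → ℝ) → ℝ≥0∞) → ℝ≥0∞) : Prop :=
  (∀ f : (Fin n → ℝ) → ℝ≥0∞, Measurable f → N f = 0 → f =ᵐ[volume] 0) ∧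
  (∀ f g : (Fin n → ℝ) → ℝ≥0∞, Measurable f → Measurable g →
    (∀ᵐ x ∂volume, g x ≤ f x) → N g ≤ N f) ∧
  (∀ (fm : ℕ → (Fin n → ℝ) → ℝ≥0∞) (f : (Fin n → ℝ) → ℝ≥0∞),
    (∀ m, Measurable (fm m)) → Measurable f →
    (∀ᵐ x ∂volume, Monotone (fun m => fm m x) ∧
      Tendsto (fun m => fm m x) atTop (nhds (f x))) →
    Monotone (fun m => N (fm m)) ∧ Tendsto (fun m => N (fm m)) atTop (nhds (N f))) ∧
  (∀ (x : Fin n → ℝ) (r : ℝ), 0 < r →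
    N ((eucBall n x r).indicator fun _ => (1 : ℝ≥0∞)) ≠ ∞)

/-- `N` is a ball Banach function norm: a ball quasi-Banach function norm that moreover
satisfies the triangle inequality and locally dominates the `L¹` norm. -/
def IsBallBanachNorm (n : ℕ) (N : ((Fin n → ℝ) → ℝ≥0∞) → ℝ≥0∞) : Prop :=
  IsBQBFNorm n N ∧
  (∀ f g : (Fin n → ℝ) → ℝ≥0∞, Measurable f → Measurable g → N (f + g) ≤ N f + N g) ∧
  (∀ (x : Fin n → ℝ) (r : ℝ), 0 < r → ∃ C : ℝ≥0∞, 0 < C ∧ C ≠ ∞ ∧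
    ∀ f : (Fin n → ℝ) → ℝ≥0∞, Measurable f → (∫⁻ y in eucBall n x r, f y) ≤ C * N f)

/-- The associate (Köthe dual) norm of a function norm `N`. -/
def assocNormOf (n : ℕ) (N : ((Fin n → ℝ) → ℝ≥0∞) → ℝ≥0∞)
    (f : (Fin n → ℝ) → ℝ≥0∞) : ℝ≥0∞ :=
  ⨆ (g : (Fin n → ℝ) → ℝ≥0∞) (_ : Measurable g) (_ : N g = 1), ∫⁻ x, f x * g x

/-- The `θ`-convexification of a function norm: `‖f‖_{X^θ} = ‖|f|^θ‖_X^{1/θ}`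
(here stated with `θ` in place of `1/p`, so `X^{1/p}` is `convexPow n (1/p) N`). -/
def convexPow (n : ℕ) (θ : ℝ) (N : ((Fin n → ℝ) → ℝ≥0∞) → ℝ≥0∞)
    (f : (Fin n → ℝ) → ℝ≥0∞) : ℝ≥0∞ :=
  N (fun x => f x ^ θ) ^ (1 / θ)

/-- The associate space norm of the mixed-norm Herz space, for complex-valued functions. -/
def herzAssocNormC (n : ℕ) (α : Fin n → ℝ) (p q : Fin n → ℝ≥0∞)
    (f : (Fin n → ℝ) → ℂ) : ℝ≥0∞ :=
  ⨆ (g : (Fin n → ℝ) → ℂ) (_ : Measurable g) (_ : herzNormC n α p q g = 1),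
    ∫⁻ x, (‖f x * g x‖₊ : ℝ≥0∞)

/-!
A one-dimensional Herz norm is a mixed Lebesgue norm, `L^q` in `x` and `ℓ^p` in `k`, of the
function `2^{kα} 1_{R_k}(x) g(x)` on `ℤ × ℝ`. For finite exponents it therefore satisfies dominated
convergence, and so does the mixed norm on `ℝⁿ`, because this property is inherited by iterated
norms.

Since `‖1_{A_m}‖ < ∞` and `A_m` exhausts `ℝⁿ` up to a null set, dominated convergence reduces the
approximation of `f` to that of `1_{A_m} s` with `s` simple, hence by linearity to that of
`1_{B ∩ A_m}` with `B` measurable. The sets `B` for which the latter function is a limit of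
functions in `H(ℝⁿ)` include all measurable boxes and are closed under complements and countable
disjoint unions, so they are all the measurable sets by the π-λ theorem.
-/

universe u

/-- `N` is a quasi-norm on the `ℝ≥0∞`-valued functions on `(X, μ)` that is monotone, homogeneous,
quasi-subadditive and order continuous (dominated convergence to zero holds). Two choices make the
notion stable under iteration, see `IsOrderContQuasiNorm.prod`: in `tendsto_zero` convergence is
required only where the majorant is finite, and `measurable_fiber` says that `N` maps a jointly
measurable function to a measurable function of the parameter. -/
structure IsOrderContQuasiNorm {X : Type u} [MeasurableSpace X] (μ : Measure X)
    (N : (X → ℝ≥0∞) → ℝ≥0∞) : Prop where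
  mono_ae {f g : X → ℝ≥0∞} (hfg : f ≤ᵐ[μ] g) : N f ≤ N g
  const_mul {c : ℝ≥0∞} (hc : c ≠ ∞) (f : X → ℝ≥0∞) : N (fun x => c * f x) = c * N f
  exists_add_le : ∃ C : ℝ≥0∞, C ≠ ∞ ∧ ∀ f g : X → ℝ≥0∞, Measurable f → Measurable g →
    N (fun x => f x + g x) ≤ C * (N f + N g)
  tendsto_zero {F : ℕ → X → ℝ≥0∞} {G : X → ℝ≥0∞} (hF : ∀ j, Measurable (F j))
    (hG : Measurable G) (hFG : ∀ j, F j ≤ᵐ[μ] G) (hfin : N G ≠ ∞)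
    (hlim : ∀ᵐ x ∂μ, G x ≠ ∞ → Tendsto (fun j => F j x) atTop (nhds 0)) :
    Tendsto (fun j => N (F j)) atTop (nhds 0)
  measurable_fiber {Z : Type u} [MeasurableSpace Z] {f : Z × X → ℝ≥0∞} (hf : Measurable f) :
    Measurable fun z => N fun x => f (z, x)

namespace IsOrderContQuasiNorm

variable {X Y : Type u} [MeasurableSpace X] [MeasurableSpace Y] {μ : Measure X} {ν : Measure Y}
  {N : (X → ℝ≥0∞) → ℝ≥0∞} {M : (Y → ℝ≥0∞) → ℝ≥0∞}

theorem mono (hN : IsOrderContQuasiNorm μ N) {f g : X → ℝ≥0∞} (hfg : ∀ x, f x ≤ g x) :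
    N f ≤ N g :=
  hN.mono_ae (Eventually.of_forall hfg)

theorem map_zero (hN : IsOrderContQuasiNorm μ N) : N (fun _ => 0) = 0 := by
  simpa only [zero_mul] using hN.const_mul zero_ne_top fun _ => 0

protected theorem eLpNorm {p : ℝ≥0∞} (hp₀ : p ≠ 0) (hp : p ≠ ∞) [SFinite μ] :
    IsOrderContQuasiNorm μ fun f => eLpNorm f p μ := by
  have hr : 0 < p.toReal := toReal_pos hp₀ hp
  have hr' : 0 < 1 / p.toReal := one_div_pos.2 hr
  have hnorm : ∀ f : X → ℝ≥0∞, eLpNorm f p μ = (∫⁻ x, f x ^ p.toReal ∂μ) ^ (1 / p.toReal) :=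
    fun f => eLpNorm_eq_lintegral_rpow_enorm_toReal hp₀ hp
  refine
    { mono_ae := fun hfg => eLpNorm_mono_enorm_ae hfg
      const_mul := fun {c} hc f => ?_
      exists_add_le := ⟨LpAddConst p, (LpAddConst_lt_top p).ne, fun f g hf hg =>
        eLpNorm_add_le' hf.aestronglyMeasurable hg.aestronglyMeasurable p⟩
      tendsto_zero := fun {F G} hF hG hFG hfin hlim => ?_
      measurable_fiber := fun {Z _ f} hf => ?_ }
  · simp only [hnorm, mul_rpow_of_nonneg _ _ hr.le]
    rw [lintegral_const_mul' _ _ (rpow_ne_top_of_nonneg hr.le hc), mul_rpow_of_nonneg _ _ hr'.le,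
      ← rpow_mul, mul_one_div_cancel hr.ne', rpow_one]
  · simp only [hnorm] at hfin ⊢
    have hint : ∫⁻ x, G x ^ p.toReal ∂μ ≠ ∞ := fun h => hfin (by rw [h, top_rpow_of_pos hr'])
    have hpow : ∀ᵐ x ∂μ, Tendsto (fun j => F j x ^ p.toReal) atTop (nhds 0) := by
      filter_upwards [hlim, ae_lt_top (hG.pow_const _) hint] with x hx hGx
      have hGx' : G x ≠ ∞ := fun h => hGx.ne (by rw [h, top_rpow_of_pos hr])
      simpa only [zero_rpow_of_pos hr] using (hx hGx').ennrpow_const p.toReal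
    have hlint := tendsto_lintegral_of_dominated_convergence (fun x => G x ^ p.toReal)
      (fun j => (hF j).pow_const _)
      (fun j => (hFG j).mono fun x hx => rpow_le_rpow hx hr.le) hint hpow
    simpa only [lintegral_zero, zero_rpow_of_pos hr'] using hlint.ennrpow_const (1 / p.toReal)
  · simp only [hnorm]
    exact (hf.pow_const _).lintegral_prod_right'.pow_const _

theorem prod [SFinite ν] (hN : IsOrderContQuasiNorm μ N) (hM : IsOrderContQuasiNorm ν M) :
    IsOrderContQuasiNorm (μ.prod ν) fun f => N fun x => M fun y => f (x, y) where
  mono_ae hfg := hN.mono_ae <| (Measure.ae_ae_of_ae_prod hfg).mono fun _ hx => hM.mono_ae hx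
  const_mul hc f := by simp only [hM.const_mul hc, hN.const_mul hc]
  exists_add_le := by
    obtain ⟨C, hC, hNadd⟩ := hN.exists_add_le
    obtain ⟨D, hD, hMadd⟩ := hM.exists_add_le
    refine ⟨D * C, mul_ne_top hD hC, fun f g hf hg => ?_⟩
    calc N (fun x => M fun y => f (x, y) + g (x, y))
        ≤ N fun x => D * (M (fun y => f (x, y)) + M fun y => g (x, y)) :=
          hN.mono fun x =>
            hMadd _ _ (hf.comp measurable_prodMk_left) (hg.comp measurable_prodMk_left)
      _ = D * N fun x => M (fun y => f (x, y)) + M fun y => g (x, y) := hN.const_mul hD _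
      _ ≤ D * (C * _) := by
          gcongr; exact hNadd _ _ (hM.measurable_fiber hf) (hM.measurable_fiber hg)
      _ = _ := (mul_assoc _ _ _).symm
  tendsto_zero {F G} hF hG hFG hfin hlim := by
    have hFG' : ∀ᵐ x ∂μ, ∀ j, ∀ᵐ y ∂ν, F j (x, y) ≤ G (x, y) :=
      ae_all_iff.2 fun j => Measure.ae_ae_of_ae_prod (hFG j)
    refine hN.tendsto_zero (fun j => hM.measurable_fiber (hF j)) (hM.measurable_fiber hG)
      (fun j => hFG'.mono fun x hx => hM.mono_ae (hx j)) hfin ?_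
    filter_upwards [hFG', Measure.ae_ae_of_ae_prod hlim] with x hx hxlim hGx
    exact hM.tendsto_zero (fun j => (hF j).comp measurable_prodMk_left)
      (hG.comp measurable_prodMk_left) hx hGx hxlim
  measurable_fiber {Z _ f} hf := by
    refine hN.measurable_fiber (f := fun z : Z × X => M fun y => f (z.1, z.2, y)) ?_
    exact hM.measurable_fiber (f := fun z : (Z × X) × Y => f (z.1.1, z.1.2, z.2)) (by fun_prop)

theorem weighted_comp (hN : IsOrderContQuasiNorm μ N) {w : X → ℝ≥0∞} (hw : Measurable w)
    (hw' : ∀ x, w x ≠ ∞) {π : X → Y} (hπ : Measure.QuasiMeasurePreserving π μ ν) :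
    IsOrderContQuasiNorm ν fun f => N fun x => w x * f (π x) := by
  have hπm : Measurable π := hπ.measurable
  have hwf : ∀ {f : Y → ℝ≥0∞}, Measurable f → Measurable fun x => w x * f (π x) :=
    fun hf => hw.mul (hf.comp hπm)
  have hle : ∀ {f g : Y → ℝ≥0∞}, f ≤ᵐ[ν] g → ∀ᵐ x ∂μ, w x * f (π x) ≤ w x * g (π x) :=
    fun hfg => (hπ.ae hfg).mono fun _ hx => mul_le_mul_right hx _
  refine
    { mono_ae := fun hfg => hN.mono_ae (hle hfg)
      const_mul := fun hc f => by simp only [mul_left_comm _ _ (f _), hN.const_mul hc]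
      exists_add_le := ?_
      tendsto_zero := fun {_ G} hF hG hFG hfin hlim =>
        hN.tendsto_zero (fun j => hwf (hF j)) (hwf hG) (fun j => hle (hFG j)) hfin ?_
      measurable_fiber := fun {Z _ f} hf =>
        hN.measurable_fiber (f := fun z : Z × X => w z.2 * f (z.1, π z.2)) (by fun_prop) }
  · obtain ⟨C, hC, hadd⟩ := hN.exists_add_le
    refine ⟨C, hC, fun f g hf hg => ?_⟩
    simp only [mul_add (w _)]
    exact hadd _ _ (hwf hf) (hwf hg)
  · filter_upwards [hπ.ae hlim] with x hx hGx
    rcases eq_or_ne (w x) 0 with h0 | h0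
    · simp only [h0, zero_mul, tendsto_const_nhds]
    · have hGx' : G (π x) ≠ ∞ := fun h => hGx (by rw [h, mul_top h0])
      simpa only [mul_zero] using ENNReal.Tendsto.const_mul (hx hGx') (Or.inr (hw' x))

theorem comp (hN : IsOrderContQuasiNorm μ N) {π : X → Y}
    (hπ : Measure.QuasiMeasurePreserving π μ ν) :
    IsOrderContQuasiNorm ν fun f => N fun x => f (π x) := by
  simpa only [one_mul] using
    hN.weighted_comp (w := fun _ => 1) measurable_const (fun _ => one_ne_top) hπ

/-! ### Density from a π-system -/

theorem exists_pos_lt_of_le_add (hN : IsOrderContQuasiNorm μ N) {ε : ℝ≥0∞} (hε : 0 < ε) :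
    ∃ δ > 0, ∀ f g h : X → ℝ≥0∞, Measurable f → Measurable g → (∀ x, h x ≤ f x + g x) →
      N f < δ → N g < δ → N h < ε := by
  obtain ⟨C, hC, hadd⟩ := hN.exists_add_le
  obtain ⟨δ, hδ, hδε⟩ := ENNReal.exists_pos_mul_lt (mul_ne_top hC (ofNat_ne_top (n := 2))) hε.ne'
  refine ⟨δ, hδ, fun f g h hf hg hle hfδ hgδ => ?_⟩
  calc N h ≤ N fun x => f x + g x := hN.mono hle
    _ ≤ C * (N f + N g) := hadd f g hf hg
    _ ≤ C * (δ + δ) := by gcongr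
    _ = δ * (C * 2) := by ring
    _ < ε := hδε

variable {E : Type*} [NormedAddCommGroup E] {A : Set X} {c : E}

theorem enorm_indicator_const_ne_top (hN : IsOrderContQuasiNorm μ N)
    (hA : N (A.indicator fun _ => 1) ≠ ∞) : N (fun x => ‖A.indicator (fun _ => c) x‖ₑ) ≠ ∞ := by
  have hmul : ∀ x, ‖A.indicator (fun _ => c) x‖ₑ = ‖c‖ₑ * A.indicator (fun _ => 1) x := by
    intro x
    by_cases hx : x ∈ A <;> simp [hx]
  simp only [hmul, hN.const_mul enorm_ne_top]
  exact mul_ne_top enorm_ne_top hA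

variable [MeasurableSpace E] [BorelSpace E] [SecondCountableTopology E] {V : AddSubgroup (X → E)}

variable (V) in
/-- The measurable functions that can be approximated in the quasi-norm `N` by measurable elements
of `V`. -/
protected def closure (hN : IsOrderContQuasiNorm μ N) : AddSubgroup (X → E) :=
  AddSubgroup.ofSub
    {f | Measurable f ∧ ∀ ε > 0, ∃ g ∈ V, Measurable g ∧ N (fun x => ‖f x - g x‖ₑ) < ε}
    ⟨0, measurable_const, fun _ hε => ⟨0, V.zero_mem, measurable_const, by
      simpa only [Pi.zero_apply, sub_self, enorm_zero, hN.map_zero] using hε⟩⟩ <| by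
    rintro f₁ ⟨hf₁, happrox₁⟩ f₂ ⟨hf₂, happrox₂⟩
    rw [← sub_eq_add_neg]
    refine ⟨hf₁.sub hf₂, fun ε hε => ?_⟩
    obtain ⟨δ, hδ, hlt⟩ := hN.exists_pos_lt_of_le_add hε
    obtain ⟨g₁, hg₁V, hg₁, hfg₁⟩ := happrox₁ δ hδ
    obtain ⟨g₂, hg₂V, hg₂, hfg₂⟩ := happrox₂ δ hδ
    refine ⟨g₁ - g₂, V.sub_mem hg₁V hg₂V, hg₁.sub hg₂,
      hlt _ _ _ (hf₁.sub hg₁).enorm (hf₂.sub hg₂).enorm (fun x => ?_) hfg₁ hfg₂⟩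
    rw [Pi.sub_apply, Pi.sub_apply, sub_sub_sub_comm]
    exact enorm_sub_le

theorem mem_closure (hN : IsOrderContQuasiNorm μ N) {f : X → E} : f ∈ hN.closure V ↔
    Measurable f ∧ ∀ ε > 0, ∃ g ∈ V, Measurable g ∧ N (fun x => ‖f x - g x‖ₑ) < ε :=
  Iff.rfl

theorem mem_closure_of_mem (hN : IsOrderContQuasiNorm μ N) {g : X → E} (hgV : g ∈ V)
    (hg : Measurable g) : g ∈ hN.closure V :=
  hN.mem_closure.2 ⟨hg, fun _ hε => ⟨g, hgV, hg, by
    simpa only [sub_self, enorm_zero, hN.map_zero] using hε⟩⟩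

theorem closure_closure_le (hN : IsOrderContQuasiNorm μ N) :
    hN.closure (hN.closure V) ≤ hN.closure V := by
  intro f hf
  obtain ⟨hfm, happrox⟩ := hN.mem_closure.1 hf
  refine hN.mem_closure.2 ⟨hfm, fun ε hε => ?_⟩
  obtain ⟨δ, hδ, hlt⟩ := hN.exists_pos_lt_of_le_add hε
  obtain ⟨u, huV, hu, hfu⟩ := happrox δ hδ
  obtain ⟨g, hgV, hg, hug⟩ := (hN.mem_closure.1 huV).2 δ hδ
  refine ⟨g, hgV, hg, hlt _ _ _ (hfm.sub hu).enorm (hu.sub hg).enorm (fun x => ?_) hfu hug⟩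
  rw [← sub_add_sub_cancel (f x) (u x) (g x)]
  exact enorm_add_le _ _

theorem mem_closure_of_dominated (hN : IsOrderContQuasiNorm μ N) {f : X → E} (hf : Measurable f)
    {u : ℕ → X → E} (hu : ∀ j, u j ∈ hN.closure V) {G : X → ℝ≥0∞} (hG : Measurable G)
    (hGfin : N G ≠ ∞) (hle : ∀ j x, ‖f x - u j x‖ₑ ≤ G x)
    (hlim : ∀ᵐ x ∂μ, Tendsto (fun j => u j x) atTop (nhds (f x))) : f ∈ hN.closure V := by
  have hum : ∀ j, Measurable (u j) := fun j => (hN.mem_closure.1 (hu j)).1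
  have htend : Tendsto (fun j => N fun x => ‖f x - u j x‖ₑ) atTop (nhds 0) := by
    refine hN.tendsto_zero (fun j => (hf.sub (hum j)).enorm) hG
      (fun j => Eventually.of_forall (hle j)) hGfin (hlim.mono fun x hx _ => ?_)
    simpa only [sub_self, enorm_zero] using (hx.const_sub (f x)).enorm
  refine hN.closure_closure_le (hN.mem_closure.2 ⟨hf, fun ε hε => ?_⟩)
  obtain ⟨j, hj⟩ := (htend.eventually_lt_const hε).exists
  exact ⟨u j, hu j, hum j, hj⟩

theorem indicator_iUnion_mem_closure (hN : IsOrderContQuasiNorm μ N) (hA : MeasurableSet A)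
    (hAfin : N (fun x => ‖A.indicator (fun _ => c) x‖ₑ) ≠ ∞) {B : ℕ → Set X}
    (hB : ∀ i, MeasurableSet (B i)) (hdisj : Pairwise (Function.onFun Disjoint B))
    (hmem : ∀ i, (B i ∩ A).indicator (fun _ => c) ∈ hN.closure V) :
    ((⋃ i, B i) ∩ A).indicator (fun _ => c) ∈ hN.closure V := by
  have hacc : ∀ j, (Set.accumulate B j ∩ A).indicator (fun _ => c) ∈ hN.closure V := by
    intro j
    induction j with
    | zero => simpa only [Set.accumulate_zero_nat] using hmem 0
    | succ j ih =>
      rw [Set.accumulate_succ, Set.union_inter_distrib_right, Set.indicator_union_of_disjoint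
        ((Set.disjoint_accumulate hdisj j.lt_succ_self).mono Set.inter_subset_left
          Set.inter_subset_left)]
      exact add_mem ih (hmem (j + 1))
  have hsub : ∀ j, Set.accumulate B j ∩ A ⊆ (⋃ i, B i) ∩ A := fun j =>
    Set.inter_subset_inter_left _ (Set.accumulate_subset_iUnion j)
  have hmono : Monotone fun j => Set.accumulate B j ∩ A := fun _ _ hij =>
    Set.inter_subset_inter_left _ (Set.monotone_accumulate hij)
  refine hN.mem_closure_of_dominated
    (measurable_const.indicator ((MeasurableSet.iUnion hB).inter hA)) hacc
    (measurable_const.indicator hA).enorm hAfin (fun j x => ?_) (Eventually.of_forall fun x => ?_)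
  · rw [← Pi.sub_apply, ← Set.indicator_sdiff (hsub j)]
    exact enorm_indicator_le_of_subset (Set.sdiff_subset.trans Set.inter_subset_right) _ _
  · rw [← Set.iUnion_accumulate, Set.iUnion_inter]
    exact (hmono.tendsto_indicator _ _ _).mono_right (pure_le_nhds _)

theorem indicator_const_mem_closure (hN : IsOrderContQuasiNorm μ N) (hA : MeasurableSet A)
    (hAfin : N (fun x => ‖A.indicator (fun _ => c) x‖ₑ) ≠ ∞) {𝒞 : Set (Set X)}
    (hgen : ‹MeasurableSpace X› = MeasurableSpace.generateFrom 𝒞) (hpi : IsPiSystem 𝒞)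
    (huniv : Set.univ ∈ 𝒞) (hV : ∀ s ∈ 𝒞, (s ∩ A).indicator (fun _ => c) ∈ V) {B : Set X}
    (hB : MeasurableSet B) : (B ∩ A).indicator (fun _ => c) ∈ hN.closure V := by
  have hmeas : ∀ s ∈ 𝒞, MeasurableSet s := fun s hs =>
    hgen ▸ MeasurableSpace.measurableSet_generateFrom hs
  have hbasic : ∀ s ∈ 𝒞, (s ∩ A).indicator (fun _ => c) ∈ hN.closure V := fun s hs =>
    hN.mem_closure_of_mem (hV s hs) (measurable_const.indicator ((hmeas s hs).inter hA))
  induction B, hB using MeasurableSpace.induction_on_inter hgen hpi with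
  | empty =>
    rw [Set.empty_inter, Set.indicator_empty]
    exact zero_mem _
  | basic s hs => exact hbasic s hs
  | compl s _ ih =>
    have hcompl : sᶜ ∩ A = (Set.univ ∩ A) \ (s ∩ A) := by
      rw [Set.univ_inter, Set.sdiff_inter_self_eq_sdiff, Set.sdiff_eq, Set.inter_comm]
    rw [hcompl, Set.indicator_sdiff (Set.inter_subset_inter_left A (Set.subset_univ s))]
    exact sub_mem (hbasic _ huniv) ih
  | iUnion B hdisj hB ih => exact hN.indicator_iUnion_mem_closure hA hAfin hB hdisj ih

theorem indicator_simpleFunc_mem_closure (hN : IsOrderContQuasiNorm μ N)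
    (hA : ∀ (c : E) {B : Set X}, MeasurableSet B →
      (B ∩ A).indicator (fun _ => c) ∈ hN.closure V) (s : SimpleFunc X E) :
    A.indicator s ∈ hN.closure V := by
  induction s using SimpleFunc.induction with
  | const c hs =>
    classical
    rw [SimpleFunc.coe_piecewise, SimpleFunc.coe_const, SimpleFunc.coe_const, Function.const_zero,
      Set.piecewise_eq_indicator, Set.indicator_indicator, Set.inter_comm]
    exact hA c hs
  | add _ hf hg =>
    rw [SimpleFunc.coe_add, Set.indicator_add']
    exact add_mem hf hg

theorem mem_closure_of_indicator_mem (hN : IsOrderContQuasiNorm μ N) {A : ℕ → Set X}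
    (hAlim : ∀ᵐ x ∂μ, ∀ᶠ m in atTop, x ∈ A m)
    (hA : ∀ m (c : E) {B : Set X}, MeasurableSet B →
      (B ∩ A m).indicator (fun _ => c) ∈ hN.closure V)
    {f : X → E} (hf : Measurable f) (hfin : N (fun x => ‖f x‖ₑ) ≠ ∞) : f ∈ hN.closure V := by
  let s : ℕ → SimpleFunc X E := SimpleFunc.approxOn f hf Set.univ 0 trivial
  refine hN.mem_closure_of_dominated hf
    (fun m => hN.indicator_simpleFunc_mem_closure (hA m) (s m)) hf.enorm hfin (fun m x => ?_) ?_
  · by_cases hx : x ∈ A m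
    · simpa only [Set.indicator_of_mem hx, edist_comm _ (f x), edist_eq_enorm_sub, sub_zero] using
        SimpleFunc.edist_approxOn_le hf (Set.mem_univ 0) x m
    · rw [Set.indicator_of_notMem hx, sub_zero]
  · filter_upwards [hAlim] with x hx
    have hlim : Tendsto (fun m => s m x) atTop (nhds (f x)) :=
      SimpleFunc.tendsto_approxOn hf (Set.mem_univ 0) (subset_closure (Set.mem_univ _))
    exact hlim.congr' (hx.mono fun m hm => (Set.indicator_of_mem hm _).symm)

theorem exists_mem_lt_of_isPiSystem (hN : IsOrderContQuasiNorm μ N) {𝒞 : Set (Set X)}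
    (hgen : ‹MeasurableSpace X› = MeasurableSpace.generateFrom 𝒞) (hpi : IsPiSystem 𝒞)
    (huniv : Set.univ ∈ 𝒞) {A : ℕ → Set X} (hA : ∀ m, MeasurableSet (A m))
    (hAfin : ∀ m, N ((A m).indicator fun _ => 1) ≠ ∞)
    (hAlim : ∀ᵐ x ∂μ, ∀ᶠ m in atTop, x ∈ A m)
    (hV : ∀ m, ∀ s ∈ 𝒞, ∀ c : E, (s ∩ A m).indicator (fun _ => c) ∈ V) {f : X → E}
    (hf : Measurable f) (hfin : N (fun x => ‖f x‖ₑ) ≠ ∞) {ε : ℝ≥0∞} (hε : 0 < ε) :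
    ∃ g ∈ V, N (fun x => ‖f x - g x‖ₑ) < ε := by
  have hf_mem : f ∈ hN.closure V := hN.mem_closure_of_indicator_mem hAlim
    (fun m c _ hB => hN.indicator_const_mem_closure (hA m)
      (hN.enorm_indicator_const_ne_top (hAfin m)) hgen hpi huniv (fun s hs => hV m s hs c) hB)
    hf hfin
  obtain ⟨g, hg, -, hlt⟩ := (hN.mem_closure.1 hf_mem).2 ε hε
  exact ⟨g, hg, hlt⟩

end IsOrderContQuasiNorm

/-! ### Herz norms -/

theorem mem_herzRing {k : ℤ} {x : ℝ} : x ∈ herzRing k ↔ (2 : ℝ) ^ (k - 1) ≤ |x| ∧ |x| < 2 ^ k := by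
  rw [herzRing, Set.mem_sdiff, Set.mem_Ioo, Set.mem_Ioo, ← abs_lt, ← abs_lt, not_lt, and_comm]

theorem measurableSet_herzRing (k : ℤ) : MeasurableSet (herzRing k) :=
  measurableSet_Ioo.diff measurableSet_Ioo

theorem volume_herzRing_ne_top (k : ℤ) : volume (herzRing k) ≠ ∞ :=
  measure_ne_top_of_subset Set.sdiff_subset measure_Ioo_lt_top.ne

theorem mem_herzI {m : ℕ} {x : ℝ} :
    x ∈ herzI m ↔ (2 : ℝ) ^ (-(m : ℤ)) ≤ |x| ∧ |x| < 2 ^ (m : ℤ) := by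
  have h0 : (0 : ℝ) < 2 ^ (-(m : ℤ)) := by positivity
  rw [herzI, Set.mem_union, Set.mem_Ioc, Set.mem_Ico]
  rcases le_total 0 x with hx | hx
  · grind [abs_of_nonneg hx]
  · grind [abs_of_nonpos hx]

theorem measurableSet_herzI (m : ℕ) : MeasurableSet (herzI m) :=
  measurableSet_Ioc.union measurableSet_Ico

theorem herzI_mono : Monotone herzI := by
  intro m m' h x hx
  rw [mem_herzI] at hx ⊢
  exact ⟨(zpow_le_zpow_right₀ one_le_two (by omega)).trans hx.1,
    hx.2.trans_le (zpow_le_zpow_right₀ one_le_two (by omega))⟩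

theorem eventually_mem_herzI {x : ℝ} (hx : x ≠ 0) : ∀ᶠ m in atTop, x ∈ herzI m := by
  have hpow : Tendsto (fun m : ℕ => (2 : ℝ) ^ m) atTop atTop :=
    tendsto_pow_atTop_atTop_of_one_lt one_lt_two
  filter_upwards [hpow.eventually_gt_atTop |x|, hpow.eventually_ge_atTop |x|⁻¹] with m hlt hinv
  rw [mem_herzI, zpow_neg, zpow_natCast]
  exact ⟨inv_le_of_inv_le₀ (abs_pos.2 hx) hinv, hlt⟩

theorem mem_Icc_of_mem_herzI_of_mem_herzRing {m : ℕ} {k : ℤ} {x : ℝ} (hm : x ∈ herzI m)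
    (hk : x ∈ herzRing k) : k ∈ Finset.Icc (-(m : ℤ)) m := by
  rw [mem_herzI] at hm
  rw [mem_herzRing] at hk
  have hlower : -(m : ℤ) < k := (zpow_lt_zpow_iff_right₀ _root_.one_lt_two).1 (hm.1.trans_lt hk.2)
  have hupper : k - 1 < m := (zpow_lt_zpow_iff_right₀ _root_.one_lt_two).1 (hk.1.trans_lt hm.2)
  exact Finset.mem_Icc.2 ⟨hlower.le, by omega⟩

theorem herzA_mono (n : ℕ) : Monotone (herzA n) :=
  fun _ _ h => Set.pi_mono fun _ _ => herzI_mono h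

theorem measurableSet_herzA (n m : ℕ) : MeasurableSet (herzA n m) :=
  MeasurableSet.univ_pi fun _ => measurableSet_herzI m

theorem ae_eventually_mem_herzA (n : ℕ) : ∀ᵐ x : Fin n → ℝ, ∀ᶠ m in atTop, x ∈ herzA n m := by
  have hne : ∀ i : Fin n, ∀ᵐ x : Fin n → ℝ, x i ≠ 0 := fun i =>
    (Measure.quasiMeasurePreserving_eval (fun _ : Fin n => (volume : Measure ℝ)) i).ae
      (p := fun t => t ≠ 0) (Measure.ae_ne volume 0)
  filter_upwards [ae_all_iff.2 hne] with x hx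
  exact (eventually_all.2 fun i => eventually_mem_herzI (hx i)).mono fun _ hm i _ => hm i

theorem lpZNorm_eq_eLpNorm {p : ℝ≥0∞} (hp₀ : p ≠ 0) (a : ℤ → ℝ≥0∞) :
    lpZNorm p a = eLpNorm a p Measure.count := by
  rw [lpZNorm]
  split_ifs with hp
  · rw [hp, eLpNorm_exponent_top, eLpNormEssSup, essSup_count]; rfl
  · rw [eLpNorm_eq_lintegral_rpow_enorm_toReal hp₀ hp, lintegral_count]; rfl

theorem lqNormOn_eq_eLpNorm {q : ℝ≥0∞} (hq₀ : q ≠ 0) {s : Set ℝ} (hs : MeasurableSet s)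
    (g : ℝ → ℝ≥0∞) : lqNormOn q s g = eLpNorm g q (volume.restrict s) := by
  rw [lqNormOn]
  split_ifs with hq
  · rw [hq, eLpNorm_exponent_top, eLpNormEssSup, essSup_indicator_eq_essSup_restrict hs]; rfl
  · rw [eLpNorm_eq_lintegral_rpow_enorm_toReal hq₀ hq]; rfl

/-- The weight `2^{kα} 1_{R_k}(x)` on `ℤ × ℝ`: multiplying by it turns the Herz norm into a mixed
Lebesgue norm, `L^q` in `x` and `ℓ^p` in `k`. -/
def herzWeight (α : ℝ) (z : ℤ × ℝ) : ℝ≥0∞ :=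
  (herzRing z.1).indicator (fun _ => ENNReal.ofReal ((2 : ℝ) ^ ((z.1 : ℝ) * α))) z.2

theorem measurable_herzWeight (α : ℝ) : Measurable (herzWeight α) :=
  measurable_from_prod_countable_right fun k =>
    (measurable_const.indicator (measurableSet_herzRing k) : Measurable
      ((herzRing k).indicator fun _ => ENNReal.ofReal ((2 : ℝ) ^ ((k : ℝ) * α))))

theorem herzWeight_ne_top (α : ℝ) (z : ℤ × ℝ) : herzWeight α z ≠ ∞ :=
  ne_top_of_le_ne_top ofReal_ne_top
    (Set.indicator_le_self (herzRing z.1) (fun _ => ENNReal.ofReal (2 ^ ((z.1 : ℝ) * α))) z.2)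

theorem herzNorm1_eq_eLpNorm (α : ℝ) {p q : ℝ≥0∞} (hp₀ : p ≠ 0) (hq₀ : q ≠ 0) (hq : q ≠ ∞)
    (g : ℝ → ℝ≥0∞) : herzNorm1 α p q g =
      eLpNorm (fun k => eLpNorm (fun x => herzWeight α (k, x) * g x) q volume) p
        Measure.count := by
  rw [herzNorm1, lpZNorm_eq_eLpNorm hp₀]
  congr 1
  funext k
  have hweight : (fun x => herzWeight α (k, x) * g x) = fun x =>
      ENNReal.ofReal ((2 : ℝ) ^ ((k : ℝ) * α)) * (herzRing k).indicator g x := by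
    funext x
    by_cases hx : x ∈ herzRing k <;> simp [herzWeight, hx]
  rw [hweight, (IsOrderContQuasiNorm.eLpNorm hq₀ hq).const_mul ofReal_ne_top,
    eLpNorm_indicator_eq_eLpNorm_restrict (measurableSet_herzRing k),
    lqNormOn_eq_eLpNorm hq₀ (measurableSet_herzRing k)]

theorem isOrderContQuasiNorm_herzNorm1 (α : ℝ) {p q : ℝ≥0∞} (hp₀ : p ≠ 0) (hp : p ≠ ∞)
    (hq₀ : q ≠ 0) (hq : q ≠ ∞) : IsOrderContQuasiNorm volume (herzNorm1 α p q) := by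
  have hprod : IsOrderContQuasiNorm ((Measure.count : Measure ℤ).prod (volume : Measure ℝ))
      fun f => eLpNorm (fun k => eLpNorm (fun x => f (k, x)) q volume) p Measure.count :=
    IsOrderContQuasiNorm.prod (N := fun f => eLpNorm f p Measure.count)
      (M := fun f => eLpNorm f q volume) (.eLpNorm hp₀ hp) (.eLpNorm hq₀ hq)
  rw [funext (herzNorm1_eq_eLpNorm α hp₀ hq₀ hq)]
  exact (hprod.weighted_comp (measurable_herzWeight α) (herzWeight_ne_top α)
    Measure.quasiMeasurePreserving_snd :)

theorem quasiMeasurePreserving_snoc (n : ℕ) :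
    Measure.QuasiMeasurePreserving
      (fun z : ℝ × (Fin n → ℝ) => (Fin.snoc z.2 z.1 : Fin (n + 1) → ℝ)) volume volume := by
  have h := (volume_preserving_piFinSuccAbove (fun _ : Fin (n + 1) => ℝ) (Fin.last n)).symm
  have hsnoc : (fun z : ℝ × (Fin n → ℝ) => (Fin.snoc z.2 z.1 : Fin (n + 1) → ℝ)) =
      (MeasurableEquiv.piFinSuccAbove (fun _ => ℝ) (Fin.last n)).symm :=
    funext fun z => (Fin.insertNth_last' z.1 z.2).symm
  rw [hsnoc]
  exact h.quasiMeasurePreserving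

theorem isOrderContQuasiNorm_mixedHerzNormE (n : ℕ) (α : Fin n → ℝ) {p q : Fin n → ℝ≥0∞}
    (hp₀ : ∀ i, p i ≠ 0) (hp : ∀ i, p i ≠ ∞) (hq₀ : ∀ i, q i ≠ 0) (hq : ∀ i, q i ≠ ∞) :
    IsOrderContQuasiNorm volume (mixedHerzNormE n α p q) := by
  induction n with
  | zero =>
    have heval : mixedHerzNormE 0 α p q = fun f => eLpNorm f 1 volume := by
      funext f
      rw [eLpNorm_one_eq_lintegral_enorm, Measure.volume_pi_eq_dirac fun i => i.elim0,
        lintegral_dirac]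
      rfl
    exact heval ▸ IsOrderContQuasiNorm.eLpNorm one_ne_zero one_ne_top
  | succ n ih =>
    have hlast := isOrderContQuasiNorm_herzNorm1 (α (Fin.last n)) (hp₀ (Fin.last n))
      (hp (Fin.last n)) (hq₀ (Fin.last n)) (hq (Fin.last n))
    have hinit := ih (Fin.init α) (p := Fin.init p) (q := Fin.init q) (fun _ => hp₀ _)
      (fun _ => hp _) (fun _ => hq₀ _) (fun _ => hq _)
    exact ((hlast.prod hinit).comp (quasiMeasurePreserving_snoc n) :)

theorem lpZNorm_ne_top_of_support_subset {p : ℝ≥0∞} (hp₀ : p ≠ 0) (hp : p ≠ ∞) {a : ℤ → ℝ≥0∞}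
    {s : Finset ℤ} (hs : ∀ k ∉ s, a k = 0) (ha : ∀ k, a k ≠ ∞) : lpZNorm p a ≠ ∞ := by
  have hr : 0 < p.toReal := toReal_pos hp₀ hp
  rw [lpZNorm, if_neg hp, tsum_eq_sum (s := s) fun k hk => by rw [hs k hk, zero_rpow_of_pos hr]]
  exact rpow_ne_top_of_nonneg (one_div_pos.2 hr).le
    (sum_ne_top.2 fun k _ => rpow_ne_top_of_nonneg hr.le (ha k))

theorem lqNormOn_indicator_one {q : ℝ≥0∞} (hq₀ : q ≠ 0) (hq : q ≠ ∞) {s t : Set ℝ}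
    (hs : MeasurableSet s) (ht : MeasurableSet t) :
    lqNormOn q s (t.indicator fun _ => 1) = volume (t ∩ s) ^ (1 / q.toReal) := by
  rw [lqNormOn_eq_eLpNorm hq₀ hs, eLpNorm_indicator_const ht hq₀ hq, Measure.restrict_apply ht,
    enorm_eq_self, one_mul]

theorem herzNorm1_indicator_herzI_ne_top (α : ℝ) {p q : ℝ≥0∞} (hp₀ : p ≠ 0) (hp : p ≠ ∞)
    (hq₀ : q ≠ 0) (hq : q ≠ ∞) (m : ℕ) :
    herzNorm1 α p q ((herzI m).indicator fun _ => 1) ≠ ∞ := by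
  have hr : 0 < 1 / q.toReal := one_div_pos.2 (toReal_pos hq₀ hq)
  have hnorm : ∀ k, lqNormOn q (herzRing k) ((herzI m).indicator fun _ => 1) =
      volume (herzI m ∩ herzRing k) ^ (1 / q.toReal) := fun k =>
    lqNormOn_indicator_one hq₀ hq (measurableSet_herzRing k) (measurableSet_herzI m)
  refine lpZNorm_ne_top_of_support_subset hp₀ hp (s := Finset.Icc (-(m : ℤ)) m)
    (fun k hk => ?_) fun k => ?_
  · have hempty : herzI m ∩ herzRing k = ∅ := Set.eq_empty_of_forall_notMem fun x hx =>
      hk (mem_Icc_of_mem_herzI_of_mem_herzRing hx.1 hx.2)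
    rw [hnorm, hempty, measure_empty, zero_rpow_of_pos hr, mul_zero]
  · rw [hnorm]
    exact mul_ne_top ofReal_ne_top (rpow_ne_top_of_nonneg hr.le
      (measure_ne_top_of_subset Set.inter_subset_right (volume_herzRing_ne_top k)))

theorem mixedHerzNormE_indicator_pi (n : ℕ) (α : Fin n → ℝ) {p q : Fin n → ℝ≥0∞}
    (hp₀ : ∀ i, p i ≠ 0) (hp : ∀ i, p i ≠ ∞) (hq₀ : ∀ i, q i ≠ 0) (hq : ∀ i, q i ≠ ∞)
    {s : Fin n → Set ℝ}
    (hs : ∀ i, herzNorm1 (α i) (p i) (q i) ((s i).indicator fun _ => 1) ≠ ∞) :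
    mixedHerzNormE n α p q ((Set.univ.pi s).indicator fun _ => 1) =
      ∏ i, herzNorm1 (α i) (p i) (q i) ((s i).indicator fun _ => 1) := by
  induction n with
  | zero => simp [mixedHerzNormE]
  | succ n ih =>
    have hinit := ih (Fin.init α) (p := Fin.init p) (q := Fin.init q) (s := Fin.init s)
      (fun _ => hp₀ _) (fun _ => hp _) (fun _ => hq₀ _) (fun _ => hq _) fun _ => hs _
    have hN := isOrderContQuasiNorm_mixedHerzNormE n (Fin.init α) (p := Fin.init p)
      (q := Fin.init q) (fun _ => hp₀ _) (fun _ => hp _) (fun _ => hq₀ _) (fun _ => hq _)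
    have hsnoc : ∀ (y : Fin n → ℝ) (x : ℝ),
        (Set.univ.pi s).indicator (fun _ => (1 : ℝ≥0∞)) (Fin.snoc y x) =
          (s (Fin.last n)).indicator (fun _ => 1) x *
            (Set.univ.pi (Fin.init s)).indicator (fun _ => 1) y := by
      classical
      intro y x
      simp only [Set.indicator_apply, Set.mem_univ_pi, Fin.forall_fin_succ', Fin.snoc_castSucc,
        Fin.snoc_last, ite_zero_mul_ite_zero, mul_one, and_comm, Fin.init]
    have hone : ∀ x, (s (Fin.last n)).indicator (fun _ => (1 : ℝ≥0∞)) x ≠ ∞ := fun x =>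
      ((Set.indicator_le_self _ _ x).trans_lt one_lt_top).ne
    have hfin : ∏ i, herzNorm1 (Fin.init α i) (Fin.init p i) (Fin.init q i)
        ((Fin.init s i).indicator fun _ => 1) ≠ ∞ := prod_ne_top fun _ _ => hs _
    simp only [mixedHerzNormE, hsnoc, hN.const_mul (hone _), hinit,
      mul_comm _ (∏ i, herzNorm1 (Fin.init α i) _ _ _)]
    rw [(isOrderContQuasiNorm_herzNorm1 _ (hp₀ _) (hp _) (hq₀ _) (hq _)).const_mul hfin,
      Fin.prod_univ_castSucc]
    rfl

theorem mixedHerzNormE_indicator_herzA_ne_top (n : ℕ) (α : Fin n → ℝ) {p q : Fin n → ℝ≥0∞}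
    (hp₀ : ∀ i, p i ≠ 0) (hp : ∀ i, p i ≠ ∞) (hq₀ : ∀ i, q i ≠ 0) (hq : ∀ i, q i ≠ ∞) (m : ℕ) :
    mixedHerzNormE n α p q ((herzA n m).indicator fun _ => 1) ≠ ∞ := by
  have hI : ∀ i, herzNorm1 (α i) (p i) (q i) ((herzI m).indicator fun _ => 1) ≠ ∞ := fun i =>
    herzNorm1_indicator_herzI_ne_top (α i) (hp₀ i) (hp i) (hq₀ i) (hq i) m
  rw [herzA, mixedHerzNormE_indicator_pi n α hp₀ hp hq₀ hq hI]
  exact prod_ne_top fun i _ => hI i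

/-! ### Functions on finite grids of boxes -/

theorem IsHSimple.of_fintype {n : ℕ} {ι : Type*} [Fintype ι] {m : ℕ} {a : ι → ℂ}
    {E : ι → Fin n → Set ℝ} (hmeas : ∀ k i, MeasurableSet (E k i))
    (hsub : ∀ k, Set.univ.pi (E k) ⊆ herzA n m)
    (hdisj : Pairwise fun k l => Disjoint (Set.univ.pi (E k)) (Set.univ.pi (E l))) :
    IsHSimple n fun x => ∑ k, (Set.univ.pi (E k)).indicator (fun _ => a k) x := by
  let e := (Fintype.equivFin ι).symm
  refine ⟨m, Fintype.card ι, a ∘ e, E ∘ e, fun k i => hmeas (e k) i, fun k => hsub (e k),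
    hdisj.comp_of_injective e.injective, funext fun x => ?_⟩
  exact (e.sum_comp fun k => (Set.univ.pi (E k)).indicator (fun _ => a k) x).symm

/-- The functions supported in some `A_m` that factor through a single finitely valued measurable
function applied to each coordinate, i.e. the functions that are constant on the cells of a finite
grid of measurable boxes. In this form it is clear that they are closed under sums, and they are
all in `H(ℝⁿ)`. -/
def gridFunctions (n : ℕ) : AddSubgroup ((Fin n → ℝ) → ℂ) where
  carrier := {g | ∃ (m : ℕ) (T : Type) (φ : SimpleFunc ℝ T) (Φ : (Fin n → T) → ℂ),
    Function.support g ⊆ herzA n m ∧ g = fun x => Φ fun i => φ (x i)}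
  zero_mem' := ⟨0, Unit, SimpleFunc.const ℝ (), 0, by simp, rfl⟩
  add_mem' := by
    rintro _ _ ⟨m, T, φ, Φ, hsupp, rfl⟩ ⟨m', T', φ', Φ', hsupp', rfl⟩
    refine ⟨max m m', T × T', φ.pair φ', fun τ => Φ (fun i => (τ i).1) + Φ' fun i => (τ i).2,
      ?_, rfl⟩
    exact (Function.support_add _ _).trans <| Set.union_subset
      (hsupp.trans (herzA_mono n (le_max_left m m')))
      (hsupp'.trans (herzA_mono n (le_max_right m m')))
  neg_mem' := by
    rintro _ ⟨m, T, φ, Φ, hsupp, rfl⟩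
    exact ⟨m, T, φ, fun τ => -Φ τ, (Function.support_neg _).trans_subset hsupp, rfl⟩

theorem indicator_pi_inter_herzA_mem_gridFunctions {n : ℕ} (m : ℕ) {S : Fin n → Set ℝ}
    (hS : ∀ i, MeasurableSet (S i)) (c : ℂ) :
    (Set.univ.pi S ∩ herzA n m).indicator (fun _ => c) ∈ gridFunctions n := by
  classical
  let φ : SimpleFunc ℝ (Fin n → Prop) :=
    { toFun := fun t i => t ∈ S i ∩ herzI m
      measurableSet_fiber' := fun P => measurable_pi_iff.2
        (fun i => ((hS i).inter (measurableSet_herzI m)).mem) (measurableSet_singleton P)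
      finite_range' := Set.toFinite _ }
  refine ⟨m, _, φ, fun P => if ∀ i, P i i then c else 0,
    Set.support_indicator_subset.trans Set.inter_subset_right, funext fun x => ?_⟩
  rw [herzA, ← Set.pi_inter_distrib]
  simp only [Set.indicator_apply, Set.mem_univ_pi]
  exact if_congr Iff.rfl rfl rfl

theorem isHSimple_of_mem_gridFunctions {n : ℕ} {g : (Fin n → ℝ) → ℂ} (hg : g ∈ gridFunctions n) :
    IsHSimple n g := by
  classical
  obtain ⟨m, T, φ, Φ, hsupp, hgΦ⟩ := hg
  let cell : (Fin n → φ.range) → Fin n → Set ℝ := fun τ i => φ ⁻¹' {(τ i : T)} ∩ herzI m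
  let value : (Fin n → φ.range) → ℂ := fun τ => Φ fun i => τ i
  have hmem : ∀ {τ x}, x ∈ Set.univ.pi (cell τ) ↔ (∀ i, φ (x i) = τ i) ∧ x ∈ herzA n m := by
    intro τ x
    simp only [cell, Set.mem_univ_pi, Set.mem_inter_iff, forall_and, herzA]
    rfl
  have hsum : g = fun x => ∑ τ, (Set.univ.pi (cell τ)).indicator (fun _ => value τ) x := by
    funext x
    by_cases hx : x ∈ herzA n m
    · let τ₀ : Fin n → φ.range := fun i => ⟨φ (x i), φ.mem_range_self (x i)⟩
      rw [Finset.sum_eq_single τ₀ (fun τ _ hτ => ?_) (fun h => absurd (Finset.mem_univ _) h),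
        Set.indicator_of_mem (hmem.2 ⟨fun _ => rfl, hx⟩), hgΦ]
      exact Set.indicator_of_notMem
        (fun h => hτ (funext fun i => Subtype.ext ((hmem.1 h).1 i).symm)) _
    · rw [Function.notMem_support.1 fun h => hx (hsupp h), Finset.sum_eq_zero fun τ _ =>
        Set.indicator_of_notMem (fun h => hx (hmem.1 h).2) _]
  rw [hsum]
  refine IsHSimple.of_fintype (m := m)
    (fun τ i => (φ.measurableSet_fiber _).inter (measurableSet_herzI m))
    (fun τ x hx => (hmem.1 hx).2) fun τ τ' hne => Set.disjoint_left.2 fun x hx hx' => ?_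
  exact hne (funext fun i => Subtype.ext (((hmem.1 hx).1 i).symm.trans ((hmem.1 hx').1 i)))

/-- density of `H(ℝⁿ)` in the mixed-norm Herz space. -/
theorem mixedHerz_HSimple_dense (n : ℕ) (p q α : Fin n → ℝ)
    (hp : ∀ i, 0 < p i) (hq : ∀ i, 0 < q i)
    (f : (Fin n → ℝ) → ℂ) (hf : Measurable f)
    (hfin : herzNormC n α (fun i => ENNReal.ofReal (p i))
      (fun i => ENNReal.ofReal (q i)) f ≠ ∞)
    (ε : ℝ≥0∞) (hε : 0 < ε) :
    ∃ g : (Fin n → ℝ) → ℂ, IsHSimple n g ∧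
      herzNormC n α (fun i => ENNReal.ofReal (p i)) (fun i => ENNReal.ofReal (q i))
        (f - g) < ε := by
  have hp₀ : ∀ i, ENNReal.ofReal (p i) ≠ 0 := fun i => (ofReal_pos.2 (hp i)).ne'
  have hq₀ : ∀ i, ENNReal.ofReal (q i) ≠ 0 := fun i => (ofReal_pos.2 (hq i)).ne'
  have hN := isOrderContQuasiNorm_mixedHerzNormE n α hp₀ (fun _ => ofReal_ne_top) hq₀
    fun _ => ofReal_ne_top
  have hgrid : ∀ m, ∀ s ∈ Set.univ.pi '' Set.univ.pi fun _ : Fin n => {t | MeasurableSet t},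
      ∀ c : ℂ, (s ∩ herzA n m).indicator (fun _ => c) ∈ gridFunctions n := by
    rintro m _ ⟨S, hS, rfl⟩ c
    exact indicator_pi_inter_herzA_mem_gridFunctions m (fun i => hS i (Set.mem_univ i)) c
  obtain ⟨g, hg, hlt⟩ := hN.exists_mem_lt_of_isPiSystem generateFrom_pi.symm isPiSystem_pi
    ⟨fun _ => Set.univ, fun _ _ => MeasurableSet.univ (α := ℝ), Set.pi_univ _⟩
    (measurableSet_herzA n) (mixedHerzNormE_indicator_herzA_ne_top n α hp₀
      (fun _ => ofReal_ne_top) hq₀ fun _ => ofReal_ne_top)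
    (ae_eventually_mem_herzA n) hgrid hf hfin hε
  exact ⟨g, isHSimple_of_mem_gridFunctions hg, hlt⟩
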